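/- Let t ≥ m ≥ 1 and n ≥ 0 be integers and let q ∈ ℂ with 0 < |q| < 1. Then - Σ_{ℓ=0}^{n+1} [ q^{(t+1)ℓ^2 - ℓ} (1 - q^{2ℓ}) / ((q;q)_{n+1-ℓ} (q;q)_{n+1+ℓ}) ] · Σ_{k=-ℓ}^{ℓ-1} (-1)^k q^{-(2t+1)k(k+1)/2 + m k} = Σ Π_{i=1}^{t-1} q^{k_i^2} [ k_{i+1} - k_i - i + Σ_{j=1}^{i} (2 k_j + χ(m > j)) choose k_{i+1} - k_i ]_q, where the right-hand sum is over all tuples of integers with n+1 = k_t ≥ k_{t-1} ≥ … ≥ k_1 ≥ 0 and k_m ≥ 1. In particular, the cyclotomic coefficient C_n^{(t,m)}(q) equals q^{n+1-t} times the right-hand multisum. -/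

import Mathlib

open Finset

/-- The finite q-Pochhammer symbol `(a;q)_n`. -/
noncomputable def qPoch (q a : ℂ) (n : ℕ) : ℂ := ∏ j ∈ Finset.range n, (1 - a * q ^ j)

/-- The Gaussian binomial coefficient `[n choose k]_q`, zero outside `0 ≤ k ≤ n`. -/
noncomputable def qBinom (q : ℂ) (n k : ℤ) : ℂ :=
  if 0 ≤ k ∧ k ≤ n then
    ∏ j ∈ Finset.range k.toNat, (1 - q ^ (n - k + (j : ℤ) + 1)) / (1 - q ^ ((j : ℤ) + 1))
  else 0

/-- The product
`Π_{i=1}^{T-1} q^{k_i²} [k_{i+1} - k_i - i + Σ_{j=1}^{i}(2k_j + χ(M>j)) choose k_{i+1}-k_i]_q`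
of the vector-valued U-function, for tuples of length `t+1`; the paper's `t, m`
are `t+1, m+1`, so `χ(M > j)` (paper `j`) becomes `χ(j < m)` for 0-based `j`. -/
noncomputable def UtProdM (q : ℂ) (t m : ℕ) (K : Fin (t+1) → ℕ) : ℂ :=
  ∏ i : Fin t, (q ^ (K i.castSucc ^ 2) *
    qBinom q ((K i.succ : ℤ) - (K i.castSucc : ℤ) - ((i : ℕ) + 1)
        + ∑ j ∈ Finset.univ.filter (fun j : Fin (t+1) => (j : ℕ) ≤ (i : ℕ)),
            (2 * (K j : ℤ) + if (j : ℕ) < m then 1 else 0))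
      ((K i.succ : ℤ) - (K i.castSucc : ℤ)))

/-!
The Bailey step `S` multiplies `u_r` by `q ^ r²` and convolves with `1 / (q; q)`. By the
`q`-Vandermonde identity the kernels `1 / ((q; q)_{n-k} (q; q)_{n+k})` are eigenvectors of `S` with
eigenvalue `q ^ k²`, so `S` acts diagonally on bilateral sums against these kernels. The dilation
`P : u_n ↦ q ^ n u_n` does not: summation by parts leaves a defect, which has the shape of the
coefficient `C_n^{(t,m)}`.

For theta terms the defect vanishes by antisymmetry. This gives sequences with `y_j = P S y_{j+1}`
and `y_0 = δ_0`, and `y_0` turns a weighted sum over bounded chains into the multisum over chains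
ending at `n + 1`. The binomial theorem for Gaussian coefficients moves a Bailey step through the
sum over the top entry of a chain, so replacing `y_0` by `y_j` with `j = t - m` strips off the
entries above `k_m`. There `k_m ≥ 1` excludes exactly the zero chain, and what is left is a
commutator of `P` with a power of `S`, whose value is the defect up to sign.
-/

section QPochhammer

variable {q : ℂ}

lemma qPoch_zero (q a : ℂ) : qPoch q a 0 = 1 := by
  simp [qPoch]

lemma qPoch_self_succ (q : ℂ) (n : ℕ) :
    qPoch q q (n + 1) = qPoch q q n * (1 - q ^ (n + 1)) := by
  rw [qPoch, prod_range_succ, ← qPoch, pow_succ']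

lemma one_sub_pow_succ_ne_zero (hq : ¬IsOfFinOrder q) (n : ℕ) : 1 - q ^ (n + 1) ≠ 0 := fun h =>
  hq (isOfFinOrder_iff_pow_eq_one.2 ⟨n + 1, n.succ_pos, (sub_eq_zero.1 h).symm⟩)

lemma qPoch_self_ne_zero (hq : ¬IsOfFinOrder q) (n : ℕ) : qPoch q q n ≠ 0 := by
  refine prod_ne_zero_iff.2 fun j _ => ?_
  rw [← pow_succ']
  exact one_sub_pow_succ_ne_zero hq j

lemma qBinom_zero_right {n : ℤ} (hn : 0 ≤ n) : qBinom q n 0 = 1 := by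
  simp [qBinom, hn]

lemma qBinom_add_left (hq : ¬IsOfFinOrder q) (k d : ℕ) :
    qBinom q (k + d) k = qPoch q q (k + d) / (qPoch q q k * qPoch q q d) := by
  have factor (j : ℕ) : (1 - q ^ ((k + d : ℤ) - k + j + 1)) / (1 - q ^ ((j : ℤ) + 1)) =
      (1 - q ^ (j + d + 1)) / (1 - q ^ (j + 1)) := by
    rw [show (k + d : ℤ) - k + j + 1 = ((j + d + 1 : ℕ) : ℤ) by push_cast; ring, zpow_natCast,
      ← Nat.cast_succ, zpow_natCast]
  rw [qBinom, if_pos ⟨by positivity, by simp⟩, Int.toNat_natCast]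
  simp only [factor]
  clear factor
  have hd := qPoch_self_ne_zero hq d
  induction k with
  | zero => simp [qPoch_zero, hd]
  | succ k ih =>
    have h₁ := one_sub_pow_succ_ne_zero hq k
    have h₂ := qPoch_self_ne_zero hq k
    rw [prod_range_succ, ih]
    simp only [Nat.add_right_comm k 1 d, qPoch_self_succ]
    field_simp

lemma qBinom_self (hq : ¬IsOfFinOrder q) (k : ℕ) : qBinom q k k = 1 := by
  simpa [qPoch_zero, qPoch_self_ne_zero hq k] using qBinom_add_left hq k 0

end QPochhammer

section Convolution

variable {R : Type*} [CommRing R]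

-- The factor `1 - q ^ (i + j)` splits as `(1 - q ^ i) + q ^ i * (1 - q ^ j)`.
lemma one_sub_pow_succ_mul_sum_antidiagonal (q : R) (f : ℕ → ℕ → R) (n : ℕ) :
    (1 - q ^ (n + 1)) * ∑ p ∈ antidiagonal (n + 1), f p.1 p.2 =
      ∑ p ∈ antidiagonal n, ((1 - q ^ (p.1 + 1)) * f (p.1 + 1) p.2 +
        q ^ p.1 * (1 - q ^ (p.2 + 1)) * f p.1 (p.2 + 1)) := by
  have split : (1 - q ^ (n + 1)) * ∑ p ∈ antidiagonal (n + 1), f p.1 p.2 =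
      ∑ p ∈ antidiagonal (n + 1), (1 - q ^ p.1) * f p.1 p.2 +
        ∑ p ∈ antidiagonal (n + 1), q ^ p.1 * (1 - q ^ p.2) * f p.1 p.2 := by
    rw [mul_sum, ← sum_add_distrib]
    refine sum_congr rfl fun p hp => ?_
    rw [← mem_antidiagonal.1 hp]
    ring
  rw [split, Nat.sum_antidiagonal_succ, Nat.sum_antidiagonal_succ', sum_add_distrib]
  simp

lemma sum_antidiagonal_filter_le_fst {M : Type*} [AddCommMonoid M] {k n : ℕ} (h : k ≤ n)
    (f : ℕ → ℕ → M) :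
    ∑ p ∈ antidiagonal n with k ≤ p.1, f p.1 p.2 =
      ∑ p ∈ antidiagonal (n - k), f (k + p.1) p.2 := by
  simp [Nat.antidiagonal_filter_le_fst_of_le h, add_comm k]

end Convolution

section QIdentities

variable {q : ℂ}

lemma sum_antidiagonal_qVandermonde (hq : ¬IsOfFinOrder q) (n a : ℕ) :
    ∑ p ∈ antidiagonal n,
        q ^ (p.1 ^ 2 + a * p.1) / (qPoch q q p.1 * qPoch q q (p.1 + a) * qPoch q q p.2) =
      1 / (qPoch q q n * qPoch q q (n + a)) := by
  induction n generalizing a with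
  | zero => simp [qPoch]
  | succ n ih =>
    rw [qPoch_self_succ q n, mul_right_comm, ← div_div, eq_div_iff (one_sub_pow_succ_ne_zero hq n),
      mul_comm, one_sub_pow_succ_mul_sum_antidiagonal q
        (fun j i => q ^ (j ^ 2 + a * j) / (qPoch q q j * qPoch q q (j + a) * qPoch q q i)),
      Nat.add_right_comm, add_assoc, ← ih (a + 1)]
    refine sum_congr rfl fun ⟨j, i⟩ _ => ?_
    have h₁ := qPoch_self_ne_zero hq j
    have h₂ := qPoch_self_ne_zero hq (j + a)
    have h₃ := qPoch_self_ne_zero hq i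
    have h₄ := one_sub_pow_succ_ne_zero hq j
    have h₅ := one_sub_pow_succ_ne_zero hq i
    have h₆ := one_sub_pow_succ_ne_zero hq (j + a)
    simp only [Nat.add_right_comm j 1 a, ← add_assoc, qPoch_self_succ]
    field_simp
    ring

lemma sum_antidiagonal_qBinom_mul_pow (hq : ¬IsOfFinOrder q) (n d : ℕ) :
    ∑ p ∈ antidiagonal n, qBinom q (p.1 + d) p.1 * ((q ^ (d + 1)) ^ p.2 / qPoch q q p.2) =
      1 / qPoch q q n := by
  induction n with
  | zero => simp [qBinom_zero_right, qPoch]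
  | succ n ih =>
    rw [qPoch_self_succ q n, ← div_div, eq_div_iff (one_sub_pow_succ_ne_zero hq n),
      mul_comm, one_sub_pow_succ_mul_sum_antidiagonal q
        (fun j i => qBinom q (j + d) j * ((q ^ (d + 1)) ^ i / qPoch q q i)), ← ih]
    refine sum_congr rfl fun ⟨j, i⟩ _ => ?_
    have h₁ := qPoch_self_ne_zero hq j
    have h₂ := qPoch_self_ne_zero hq d
    have h₃ := qPoch_self_ne_zero hq i
    have h₄ := one_sub_pow_succ_ne_zero hq j
    have h₅ := one_sub_pow_succ_ne_zero hq i
    simp only [qBinom_add_left hq, Nat.add_right_comm j 1 d, qPoch_self_succ]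
    field_simp
    ring

end QIdentities

section BaileyStep

/-- One step of the Bailey chain relative to `a = 1` with both parameters sent to infinity:
`u ↦ (n ↦ ∑ r ≤ n, q ^ r² u_r / (q; q)_{n-r})`, written as a convolution. -/
noncomputable def baileyStep (q : ℂ) (u : ℕ → ℂ) (n : ℕ) : ℂ :=
  ∑ p ∈ antidiagonal n, q ^ p.1 ^ 2 * u p.1 / qPoch q q p.2

variable {q : ℂ}

lemma baileyStep_eq_coeff (u : ℕ → ℂ) (n : ℕ) :
    baileyStep q u n = PowerSeries.coeff n
      ((PowerSeries.mk fun r => q ^ r ^ 2 * u r) * PowerSeries.mk fun r => 1 / qPoch q q r) := by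
  simp [baileyStep, PowerSeries.coeff_mul, div_eq_mul_inv]

open PowerSeries in
lemma sum_antidiagonal_qBinom_mul_baileyStep (hq : ¬IsOfFinOrder q) (d n : ℕ) (u : ℕ → ℂ) :
    ∑ p ∈ antidiagonal n, qBinom q (p.1 + d) p.1 * ((q ^ (d + 1)) ^ p.2 * baileyStep q u p.2) =
      ∑ p ∈ antidiagonal n, q ^ p.1 ^ 2 * ((q ^ (d + 1)) ^ p.1 * u p.1) / qPoch q q p.2 := by
  let x := q ^ (d + 1)
  let U : PowerSeries ℂ := mk fun r => q ^ r ^ 2 * u r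
  let E : PowerSeries ℂ := mk fun r => 1 / qPoch q q r
  let G : PowerSeries ℂ := mk fun j => qBinom q (j + d) j
  have hGE : G * rescale x E = E := by
    ext k
    simpa [G, E, x, coeff_mul, div_eq_mul_inv] using sum_antidiagonal_qBinom_mul_pow hq k d
  have hGUE : G * rescale x (U * E) = rescale x U * E := by
    rw [map_mul, mul_left_comm, hGE]
  have hcoeff := congrArg (coeff n) hGUE
  rw [coeff_mul, coeff_mul] at hcoeff
  simp only [coeff_rescale, ← baileyStep_eq_coeff, U, G, E, x, coeff_mk] at hcoeff
  rw [hcoeff]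
  exact sum_congr rfl fun p _ => by ring

end BaileyStep

section BaileyKernel

/-- The reciprocal `1 / (q; q)_k` extended to all integers `k`, by the value `0` for `k < 0`. -/
noncomputable def invQPoch (q : ℂ) (k : ℤ) : ℂ :=
  if 0 ≤ k then 1 / qPoch q q k.toNat else 0

/-- The kernel `1 / ((q; q)_{n-k} (q; q)_{n+k})` of Bailey pairs relative to `a = 1`, extended to
all integers `k`; it vanishes for `|k| > n`. -/
noncomputable def baileyKernel (q : ℂ) (k : ℤ) (n : ℕ) : ℂ :=
  invQPoch q (n - k) * invQPoch q (n + k)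

/-- The kernel `1 / ((q; q)_{n-1-k} (q; q)_{n+k})` of Bailey pairs relative to `a = q`, up to the
factor `1 - q` and with `n - 1` in place of the usual `n`, extended to all integers `k`. -/
noncomputable def shiftedBaileyKernel (q : ℂ) (k : ℤ) (n : ℕ) : ℂ :=
  invQPoch q (n - k - 1) * invQPoch q (n + k)

variable {q : ℂ}

lemma invQPoch_natCast (n : ℕ) : invQPoch q n = 1 / qPoch q q n := by
  simp [invQPoch]

lemma invQPoch_of_neg {k : ℤ} (hk : k < 0) : invQPoch q k = 0 :=
  if_neg hk.not_ge

lemma one_sub_zpow_mul_invQPoch (hq : ¬IsOfFinOrder q) (k : ℤ) :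
    (1 - q ^ k) * invQPoch q k = invQPoch q (k - 1) := by
  obtain hk | rfl | hk := lt_trichotomy k 0
  · rw [invQPoch_of_neg hk, invQPoch_of_neg (by lia), mul_zero]
  · simp [invQPoch_of_neg]
  · obtain ⟨n, rfl⟩ : ∃ n : ℕ, k = (n + 1 : ℕ) := ⟨k.toNat - 1, by lia⟩
    have h₁ := one_sub_pow_succ_ne_zero hq n
    have h₂ := qPoch_self_ne_zero hq n
    rw [show ((n + 1 : ℕ) : ℤ) - 1 = n by lia, invQPoch_natCast, invQPoch_natCast, zpow_natCast,
      qPoch_self_succ]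
    field_simp

lemma baileyKernel_neg (k : ℤ) (n : ℕ) : baileyKernel q (-k) n = baileyKernel q k n := by
  rw [baileyKernel, sub_neg_eq_add, ← sub_eq_add_neg, mul_comm, baileyKernel]

lemma baileyKernel_eq_zero {k : ℤ} {n : ℕ} (h : (n : ℤ) < |k|) : baileyKernel q k n = 0 := by
  obtain hk | hk := lt_abs.1 h
  · rw [baileyKernel, invQPoch_of_neg (by lia), zero_mul]
  · rw [baileyKernel, invQPoch_of_neg (k := n + k) (by lia), mul_zero]

lemma baileyKernel_natCast_add (r n : ℕ) :
    baileyKernel q r (r + n) = 1 / (qPoch q q n * qPoch q q (n + 2 * r)) := by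
  rw [baileyKernel, show ((r + n : ℕ) : ℤ) - r = n by lia,
    show ((r + n : ℕ) : ℤ) + r = (n + 2 * r : ℕ) by lia, invQPoch_natCast, invQPoch_natCast,
    one_div_mul_one_div]

lemma shiftedBaileyKernel_reflect (k : ℤ) (n : ℕ) :
    shiftedBaileyKernel q (-1 - k) n = shiftedBaileyKernel q k n := by
  rw [shiftedBaileyKernel, shiftedBaileyKernel, mul_comm]
  ring_nf

lemma shiftedBaileyKernel_self (n : ℕ) : shiftedBaileyKernel q n n = 0 := by
  simp [shiftedBaileyKernel, invQPoch_of_neg]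

lemma pow_mul_baileyKernel (hq0 : q ≠ 0) (hq : ¬IsOfFinOrder q) (k : ℤ) (n : ℕ) :
    q ^ n * baileyKernel q k n = q ^ k * (baileyKernel q k n - shiftedBaileyKernel q k n) := by
  rw [shiftedBaileyKernel, ← one_sub_zpow_mul_invQPoch hq (n - k), baileyKernel, zpow_sub₀ hq0,
    zpow_natCast]
  field_simp [zpow_ne_zero k hq0]
  ring

lemma shiftedBaileyKernel_sub_one_sub (hq0 : q ≠ 0) (hq : ¬IsOfFinOrder q) (k : ℤ) (n : ℕ) :
    shiftedBaileyKernel q (k - 1) n - q ^ (2 * k) * shiftedBaileyKernel q k n =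
      (1 - q ^ (2 * k)) * baileyKernel q k n := by
  rw [shiftedBaileyKernel, shiftedBaileyKernel, show (n : ℤ) - (k - 1) - 1 = n - k by ring,
    ← add_sub_assoc, ← one_sub_zpow_mul_invQPoch hq (n - k), ← one_sub_zpow_mul_invQPoch hq (n + k),
    baileyKernel, two_mul, zpow_add₀ hq0, zpow_add₀ hq0, zpow_sub₀ hq0, zpow_natCast]
  field_simp [zpow_ne_zero k hq0]
  ring

lemma baileyStep_baileyKernel (hq : ¬IsOfFinOrder q) (k : ℤ) (n : ℕ) :
    baileyStep q (baileyKernel q k) n = q ^ (k ^ 2) * baileyKernel q k n := by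
  wlog hk : 0 ≤ k generalizing k
  · have h := this (-k) (by lia)
    rwa [neg_sq, baileyKernel_neg, funext (baileyKernel_neg k)] at h
  lift k to ℕ using hk with r
  rw [baileyStep]
  have support : ∑ p ∈ antidiagonal n, q ^ p.1 ^ 2 * baileyKernel q r p.1 / qPoch q q p.2 =
      ∑ p ∈ antidiagonal n with r ≤ p.1, q ^ p.1 ^ 2 * baileyKernel q r p.1 / qPoch q q p.2 := by
    refine (sum_filter_of_ne fun p _ hp => ?_).symm
    by_contra! h
    exact hp (by rw [baileyKernel_eq_zero (by simpa using h), mul_zero, zero_div])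
  rw [support]
  obtain h | h := lt_or_ge n r
  · rw [baileyKernel_eq_zero (by simpa using h), mul_zero, sum_eq_zero]
    grind [HasAntidiagonal.mem_antidiagonal]
  obtain ⟨N, rfl⟩ := Nat.exists_eq_add_of_le h
  rw [sum_antidiagonal_filter_le_fst h
      fun s a => q ^ s ^ 2 * baileyKernel q r s / qPoch q q a, Nat.add_sub_cancel_left,
    baileyKernel_natCast_add, ← sum_antidiagonal_qVandermonde hq, mul_sum]
  refine sum_congr rfl fun p _ => ?_
  rw [baileyKernel_natCast_add, ← Nat.cast_pow, zpow_natCast]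
  ring

end BaileyKernel

section SymmetricSums

lemma sum_Icc_neg_eq_sum_range {M : Type*} [AddCommMonoid M] {f : ℤ → M}
    (hf : ∀ k < 0, f k = 0) (n : ℕ) :
    ∑ k ∈ Icc (-n : ℤ) n, f k = ∑ l ∈ range (n + 1), f l := by
  refine (sum_of_injOn Nat.cast Nat.cast_injective.injOn (fun l hl => ?_) (fun k hk hk' => ?_)
    fun _ _ => rfl).symm
  · simp only [coe_range, Set.mem_Iio] at hl
    simp only [coe_Icc, Set.mem_Icc]
    lia
  · refine hf k (lt_of_not_ge fun h => hk' ⟨k.toNat, ?_, by lia⟩)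
    simp only [mem_Icc] at hk
    simp only [coe_range, Set.mem_Iio]
    lia

lemma sum_Ico_neg_succ {M : Type*} [AddCommMonoid M] (f : ℤ → M) (n : ℕ) :
    ∑ k ∈ Ico (-(n + 1 : ℕ) : ℤ) (n + 1 : ℕ), f k =
      ∑ k ∈ Ico (-n : ℤ) n, f k + (f n + f (-1 - n)) := by
  have hIco : Ico (-(n + 1 : ℕ) : ℤ) (n + 1 : ℕ) =
      insert (-1 - n : ℤ) (insert (n : ℤ) (Ico (-n : ℤ) n)) := by
    ext k
    simp only [mem_insert, mem_Ico]
    lia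
  rw [hIco, sum_insert (by simp), sum_insert (by simp), add_comm, add_comm (f n), add_assoc]

lemma sum_Ico_neg_eq_zero_of_reflect {M : Type*} [AddCommGroup M] [IsAddTorsionFree M]
    {f : ℤ → M} (hf : ∀ k, f (-1 - k) = -f k) (l : ℤ) :
    ∑ k ∈ Ico (-l) l, f k = 0 := by
  have reflect : ∑ k ∈ Ico (-l) l, f k = ∑ k ∈ Ico (-l) l, f (-1 - k) :=
    sum_nbij' (-1 - ·) (-1 - ·) (fun k => by simp only [mem_Ico]; lia)
      (fun k => by simp only [mem_Ico]; lia) (by simp) (by simp) (by simp)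
  simp only [hf, sum_neg_distrib] at reflect
  exact self_eq_neg.1 reflect

lemma sum_range_sub_mul_sum_Ico {R : Type*} [CommRing R] {w : ℤ → R}
    (hw : ∀ k, w (-1 - k) = w k) (f : ℤ → R) (n : ℕ) :
    ∑ l ∈ range (n + 1), (w (l - 1) - w l) * ∑ k ∈ Ico (-l : ℤ) l, f k +
        w n * ∑ k ∈ Ico (-n : ℤ) n, f k =
      ∑ k ∈ Ico (-n : ℤ) n, w k * f k := by
  induction n with
  | zero => simp
  | succ n ih =>
    rw [sum_range_succ, sum_Ico_neg_succ (fun k => w k * f k), ← ih, sum_Ico_neg_succ f, hw,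
      Nat.cast_succ, add_sub_cancel_right]
    ring

end SymmetricSums

section BilateralBaileySum

/-- The second member of the Bailey pair relative to `a = 1` attached to the bilateral
sequence `a`, that is `n ↦ ∑ a_k / ((q; q)_{n-k} (q; q)_{n+k})`, summed over `|k| ≤ n`. -/
noncomputable def baileySum (q : ℂ) (a : ℤ → ℂ) (n : ℕ) : ℂ :=
  ∑ k ∈ Icc (-n : ℤ) n, a k * baileyKernel q k n

/-- The dilation `z ↦ q z` of the generating function of a sequence. -/
def qDilate (q : ℂ) (u : ℕ → ℂ) (n : ℕ) : ℂ :=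
  q ^ n * u n

/-- The bilateral sequence `q ^ (l² - l) (1 - q ^ 2l) ∑_{-l ≤ k < l} e_k`, the correction produced
by dilating a bilateral Bailey sum; it vanishes for `l ≤ 0`. -/
noncomputable def dilationDefect (q : ℂ) (e : ℤ → ℂ) (l : ℤ) : ℂ :=
  q ^ (l ^ 2 - l) * (1 - q ^ (2 * l)) * ∑ k ∈ Ico (-l) l, e k

variable {q : ℂ}

lemma dilationDefect_of_neg {l : ℤ} (hl : l < 0) (e : ℤ → ℂ) : dilationDefect q e l = 0 := by
  rw [dilationDefect, Ico_eq_empty (by lia), sum_empty, mul_zero]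

lemma baileySum_sub (a b : ℤ → ℂ) :
    baileySum q (a - b) = baileySum q a - baileySum q b := by
  ext n
  simp [baileySum, sub_mul]

lemma baileySum_comp_neg (a : ℤ → ℂ) : baileySum q (fun k => a (-k)) = baileySum q a := by
  ext n
  refine sum_nbij' (- ·) (- ·) ?_ ?_ ?_ ?_ ?_ <;>
    simp +contextual [baileyKernel_neg, and_comm, neg_le]

lemma baileySum_eq_sum_Icc (a : ℤ → ℂ) {n N : ℕ} (h : n ≤ N) :
    baileySum q a n = ∑ k ∈ Icc (-N : ℤ) N, a k * baileyKernel q k n := by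
  refine sum_subset (Icc_subset_Icc (by lia) (by lia)) fun k _ hk => ?_
  rw [baileyKernel_eq_zero, mul_zero]
  grind [lt_abs]

lemma baileyStep_baileySum (hq : ¬IsOfFinOrder q) (a : ℤ → ℂ) :
    baileyStep q (baileySum q a) = baileySum q fun k => q ^ (k ^ 2) * a k := by
  ext n
  have expand : baileyStep q (baileySum q a) n =
      ∑ k ∈ Icc (-n : ℤ) n, a k * baileyStep q (baileyKernel q k) n := by
    simp only [baileyStep, mul_sum]
    rw [sum_comm]
    refine sum_congr rfl fun p hp => ?_
    rw [baileySum_eq_sum_Icc a (HasAntidiagonal.antidiagonal.fst_le hp), mul_sum, sum_div]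
    exact sum_congr rfl fun k _ => by ring
  rw [expand, baileySum]
  refine sum_congr rfl fun k _ => ?_
  rw [baileyStep_baileyKernel hq]
  ring

lemma baileyStep_iterate_baileySum (hq0 : q ≠ 0) (hq : ¬IsOfFinOrder q) (j : ℕ) (a : ℤ → ℂ) :
    (baileyStep q)^[j] (baileySum q a) = baileySum q fun k => q ^ (j * k ^ 2) * a k := by
  induction j with
  | zero => simp
  | succ j ih =>
    rw [Function.iterate_succ_apply', ih, baileyStep_baileySum hq]
    congr! 2 with k
    rw [← mul_assoc, ← zpow_add₀ hq0]
    congr 2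
    push_cast
    ring

lemma sum_Icc_shiftedBaileyKernel (hq0 : q ≠ 0) (hq : ¬IsOfFinOrder q) (e : ℤ → ℂ) (n : ℕ) :
    ∑ k ∈ Icc (-n : ℤ) n, q ^ (k ^ 2 + k) * shiftedBaileyKernel q k n * e k =
      baileySum q (dilationDefect q e) n := by
  let w (k : ℤ) : ℂ := q ^ (k ^ 2 + k) * shiftedBaileyKernel q k n
  have w_reflect (k : ℤ) : w (-1 - k) = w k := by
    simp only [w, shiftedBaileyKernel_reflect]
    ring_nf
  have w_last : w n = 0 := by
    simp only [w, shiftedBaileyKernel_self, mul_zero]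
  have w_diff (l : ℤ) :
      w (l - 1) - w l = q ^ (l ^ 2 - l) * (1 - q ^ (2 * l)) * baileyKernel q l n := by
    simp only [w]
    rw [mul_assoc, ← shiftedBaileyKernel_sub_one_sub hq0 hq, mul_sub, ← mul_assoc _ (q ^ _),
      ← zpow_add₀ hq0]
    ring_nf
  change ∑ k ∈ Icc (-n : ℤ) n, w k * e k = _
  rw [← Ico_insert_right (by lia : (-n : ℤ) ≤ n), sum_insert right_notMem_Ico, w_last, zero_mul,
    zero_add, ← sum_range_sub_mul_sum_Ico w_reflect, w_last, zero_mul, add_zero, baileySum,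
    sum_Icc_neg_eq_sum_range fun l hl => by rw [dilationDefect_of_neg hl, zero_mul]]
  refine sum_congr rfl fun l _ => ?_
  rw [w_diff, dilationDefect]
  ring

lemma qDilate_baileySum (hq0 : q ≠ 0) (hq : ¬IsOfFinOrder q) (e : ℤ → ℂ) :
    qDilate q (baileySum q fun k => q ^ (k ^ 2) * e k) =
      baileySum q ((fun k => q ^ (k ^ 2 + k) * e k) - dilationDefect q e) := by
  ext n
  rw [baileySum_sub, Pi.sub_apply, ← sum_Icc_shiftedBaileyKernel hq0 hq, qDilate, baileySum,
    baileySum, mul_sum, ← sum_sub_distrib]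
  refine sum_congr rfl fun k _ => ?_
  rw [mul_left_comm, pow_mul_baileyKernel hq0 hq, zpow_add₀ hq0]
  ring

end BilateralBaileySum

section Theta

/-- The theta term `(-1)^k q ^ (k (k + 1) / 2 - j k (k + 1))`, antisymmetric under `k ↦ -1 - k`. -/
noncomputable def thetaTerm (q : ℂ) (j : ℕ) (k : ℤ) : ℂ :=
  (-1) ^ k * q ^ (k * (k + 1) / 2 - j * (k * (k + 1)))

variable {q : ℂ}

lemma thetaTerm_reflect (j : ℕ) (k : ℤ) : thetaTerm q j (-1 - k) = -thetaTerm q j k := by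
  rw [thetaTerm, thetaTerm, show (-1 - k) * (-1 - k + 1) = k * (k + 1) by ring,
    zpow_sub₀ (by norm_num), zpow_neg_one, div_eq_mul_inv, ← inv_zpow, ← neg_mul]
  norm_num

lemma thetaTerm_eq_zpow_mul_succ (hq0 : q ≠ 0) (j : ℕ) (k : ℤ) :
    thetaTerm q j k = q ^ (k ^ 2 + k) * thetaTerm q (j + 1) k := by
  rw [thetaTerm, thetaTerm, mul_left_comm (q ^ _), ← zpow_add₀ hq0]
  congr 2
  push_cast
  ring

lemma thetaTerm_zero_neg (hq0 : q ≠ 0) (k : ℤ) :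
    thetaTerm q 0 (-k) = q ^ (k ^ 2) * thetaTerm q 1 k := by
  obtain ⟨c, hc⟩ := Int.even_mul_succ_self k
  have hc' : -k * (-k + 1) = (c - k) + (c - k) := by linear_combination hc
  rw [thetaTerm, thetaTerm, hc, hc', mul_left_comm, ← zpow_add₀ hq0, zpow_neg, ← inv_zpow,
    inv_neg_one]
  congr 2
  push_cast
  lia

lemma dilationDefect_thetaTerm (j : ℕ) : dilationDefect q (thetaTerm q j) = 0 := by
  ext l
  rw [dilationDefect, sum_Ico_neg_eq_zero_of_reflect (thetaTerm_reflect j), mul_zero, Pi.zero_apply]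

lemma qDilate_baileyStep_baileySum_thetaTerm (hq0 : q ≠ 0) (hq : ¬IsOfFinOrder q) (j : ℕ) :
    qDilate q (baileyStep q (baileySum q (thetaTerm q (j + 1)))) = baileySum q (thetaTerm q j) := by
  rw [baileyStep_baileySum hq, qDilate_baileySum hq0 hq, dilationDefect_thetaTerm, sub_zero]
  simp only [← thetaTerm_eq_zpow_mul_succ hq0]

-- Reflection makes the sequence the Bailey step of the next one, hence invariant under dilation.
lemma baileySum_thetaTerm_zero (hq0 : q ≠ 0) (hq : ¬IsOfFinOrder q) (n : ℕ) :
    baileySum q (thetaTerm q 0) n = if n = 0 then 1 else 0 := by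
  obtain rfl | hn := eq_or_ne n 0
  · simp [baileySum, thetaTerm, baileyKernel, invQPoch, qPoch_zero]
  have step : baileyStep q (baileySum q (thetaTerm q 1)) = baileySum q (thetaTerm q 0) := by
    rw [baileyStep_baileySum hq, ← baileySum_comp_neg (thetaTerm q 0)]
    simp only [thetaTerm_zero_neg hq0]
  have invariant : q ^ n * baileySum q (thetaTerm q 0) n = baileySum q (thetaTerm q 0) n := by
    rw [← qDilate, ← step, qDilate_baileyStep_baileySum_thetaTerm hq0 hq, step]
  obtain ⟨n, rfl⟩ := Nat.exists_eq_succ_of_ne_zero hn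
  rw [if_neg hn]
  have vanishes : (1 - q ^ (n + 1)) * baileySum q (thetaTerm q 0) (n + 1) = 0 := by
    rw [sub_mul, invariant, one_mul, sub_self]
  exact (mul_eq_zero.1 vanishes).resolve_left (one_sub_pow_succ_ne_zero hq n)

end Theta

section Chains

/-- The chains `k_0 ≤ … ≤ k_i ≤ n` of natural numbers whose entries of index at least `p` are
positive. -/
def chains (p i n : ℕ) : Finset (Fin (i + 1) → ℕ) :=
  (Fintype.piFinset fun _ => range (n + 1)).filter fun k =>
    Monotone k ∧ ∀ j : Fin (i + 1), p ≤ j → 0 < k j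

variable {p i n : ℕ}

lemma mem_chains {k : Fin (i + 1) → ℕ} :
    k ∈ chains p i n ↔ k (Fin.last i) ≤ n ∧ Monotone k ∧ ∀ j : Fin (i + 1), p ≤ j → 0 < k j := by
  simp only [chains, mem_filter, Fintype.mem_piFinset, mem_range, Nat.lt_succ_iff]
  exact and_congr_left fun h => ⟨fun hk => hk _, fun hk j => (h.1 (Fin.le_last j)).trans hk⟩

lemma snoc_mem_chains (hp : p ≠ i + 1) {k : Fin (i + 1) → ℕ} {r : ℕ} :
    (Fin.snoc k r : Fin (i + 2) → ℕ) ∈ chains p (i + 1) n ↔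
      k ∈ chains p i n ∧ k (Fin.last i) ≤ r ∧ r ≤ n := by
  simp only [mem_chains, Fin.snoc_last, Fin.monotone_iff_le_succ, Fin.forall_fin_succ',
    Fin.snoc_castSucc, Fin.val_last, Fin.val_castSucc, Fin.succ_castSucc, Fin.succ_last]
  grind

lemma sum_chains_succ {M : Type*} [AddCommMonoid M] (hp : p ≠ i + 1)
    (f : (Fin (i + 2) → ℕ) → M) :
    ∑ k ∈ chains p (i + 1) n, f k =
      ∑ k ∈ chains p i n, ∑ r ∈ antidiagonal (n - k (Fin.last i)),
        f (Fin.snoc k (k (Fin.last i) + r.1)) := by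
  rw [sum_sigma']
  refine (sum_bij' (fun x _ => Fin.snoc x.1 (x.1 (Fin.last i) + x.2.1))
    (fun k _ => ⟨Fin.init k, (k (Fin.last (i + 1)) - Fin.init k (Fin.last i),
      n - k (Fin.last (i + 1)))⟩) ?_ ?_ ?_ ?_ ?_).symm
  · rintro ⟨k, r⟩ h
    simp only [mem_sigma, HasAntidiagonal.mem_antidiagonal] at h
    exact (snoc_mem_chains hp).2 ⟨h.1, by lia, by have := (mem_chains.1 h.1).1; lia⟩
  · intro k h
    rw [← Fin.snoc_init_self k, snoc_mem_chains hp] at h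
    simp only [mem_sigma, HasAntidiagonal.mem_antidiagonal]
    exact ⟨h.1, by lia⟩
  · rintro ⟨k, r⟩ h
    simp only [mem_sigma, HasAntidiagonal.mem_antidiagonal] at h
    simp only [Fin.init_snoc, Fin.snoc_last]
    congr <;> lia
  · intro k h
    rw [← Fin.snoc_init_self k, snoc_mem_chains hp] at h
    change Fin.snoc (Fin.init k) (Fin.init k _ + (k _ - Fin.init k _)) = k
    rw [Nat.add_sub_cancel' h.2.1, Fin.snoc_init_self]
  · simp

lemma sum_antidiagonal_sum_chains {M : Type*} [AddCommMonoid M]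
    (f : (Fin (i + 1) → ℕ) → ℕ → ℕ → M) :
    ∑ r ∈ antidiagonal n, ∑ k ∈ chains p i r.1, f k r.1 r.2 =
      ∑ k ∈ chains p i n, ∑ r ∈ antidiagonal (n - k (Fin.last i)),
        f k (k (Fin.last i) + r.1) r.2 := by
  rw [sum_comm' (t' := chains p i n)
    (s' := fun k => (antidiagonal n).filter fun r => k (Fin.last i) ≤ r.1)]
  · exact sum_congr rfl fun k hk => sum_antidiagonal_filter_le_fst (mem_chains.1 hk).1 (f k)
  · intro r k
    simp only [mem_chains, mem_filter, HasAntidiagonal.mem_antidiagonal]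
    grind

lemma chains_self_eq_erase (m n : ℕ) : chains m m n = (chains (m + 1) m n).erase 0 := by
  ext k
  simp only [mem_erase, mem_chains]
  constructor
  · rintro ⟨hn, hk, hpos⟩
    refine ⟨?_, hn, hk, fun j hj => by lia⟩
    rintro rfl
    exact (hpos (Fin.last m) le_rfl).ne rfl
  · rintro ⟨hne, hn, hk, -⟩
    refine ⟨hn, hk, fun j hj => Nat.pos_of_ne_zero fun hj0 => hne ?_⟩
    obtain rfl : j = Fin.last m := Fin.ext (by rw [Fin.val_last]; lia)
    ext x
    exact Nat.le_zero.1 ((hk (Fin.le_last x)).trans_eq hj0)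

lemma sum_fin_chains {M : Type*} [AddCommMonoid M] {m t : ℕ} (hmt : m ≤ t) (N : ℕ)
    (f : (Fin (t + 1) → ℕ) → M) :
    ∑ k : Fin (t + 1) → Fin (N + 1) with (∀ i : Fin t, k i.castSucc ≤ k i.succ) ∧
        (k (Fin.last t) : ℕ) = N ∧ 1 ≤ (k ⟨m, Nat.lt_succ_of_le hmt⟩ : ℕ), f (fun i => k i) =
      ∑ k ∈ chains m t N with k (Fin.last t) = N, f k := by
  refine sum_bij' (fun k _ i => (k i : ℕ)) (fun k hk i => ⟨k i, ?_⟩) ?_ ?_ ?_ ?_ ?_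
  · obtain ⟨hk, hlast⟩ := mem_filter.1 hk
    have := (mem_chains.1 hk).2.1 (Fin.le_last i)
    lia
  · simp only [mem_filter, mem_chains, mem_univ, true_and]
    rintro k ⟨hk, hlast, hpos⟩
    have mono : Monotone k := Fin.monotone_iff_le_succ.2 hk
    exact ⟨⟨hlast.le, fun a b hab => mono hab, fun j hj => hpos.trans (mono hj)⟩, hlast⟩
  · simp only [mem_filter, mem_chains, mem_univ, true_and]
    rintro k ⟨⟨hn, hk, hpos⟩, hlast⟩
    exact ⟨fun i => hk i.castSucc_le_succ, hlast, hpos _ le_rfl⟩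
  · simp
  · simp
  · simp

lemma lt_sum_of_mem_chains {m j : ℕ} {k : Fin (m + j + 1) → ℕ} (hk : k ∈ chains m (m + j) n) :
    j < ∑ x, k x := by
  have pos (x : Fin (j + 1)) : 1 ≤ k (Fin.natAdd m x) := (mem_chains.1 hk).2.2 _ (m.le_add_right x)
  calc j < ∑ _x : Fin (j + 1), 1 := by simp
    _ ≤ ∑ x : Fin (j + 1), k (Fin.natAdd m x) := sum_le_sum fun x _ => pos x
    _ ≤ ∑ x, k x := by
      rw [show ∑ x, k x = _ from Fin.sum_univ_add (a := m) (b := j + 1) k]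
      exact Nat.le_add_left _ _

end Chains

section ChainSums

variable {q : ℂ}

lemma UtProdM_snoc (q : ℂ) (i m : ℕ) (k : Fin (i + 1) → ℕ) (s : ℕ) :
    UtProdM q (i + 1) m (Fin.snoc k (k (Fin.last i) + s)) =
      UtProdM q i m k * (q ^ k (Fin.last i) ^ 2 *
        qBinom q (s + (2 * ∑ j, (k j : ℤ) + min m (i + 1) - (i + 1))) s) := by
  have card_lt : #{x ∈ range (i + 1) | x < m} = min m (i + 1) := by
    rw [← card_range (min m (i + 1))]
    congr 1
    ext x
    simp [and_comm]
  have top : ∑ j : Fin (i + 1), (2 * (k j : ℤ) + if (j : ℕ) < m then 1 else 0) =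
      2 * ∑ j, (k j : ℤ) + min m (i + 1) := by
    rw [sum_add_distrib, ← mul_sum, Fin.sum_univ_eq_sum_range fun j => if j < m then (1 : ℤ) else 0,
      sum_boole, card_lt, Nat.cast_min]
  rw [UtProdM, Fin.prod_univ_castSucc]
  congr 1
  · refine prod_congr rfl fun x _ => ?_
    rw [sum_filter, Fin.sum_univ_castSucc, if_neg (by simp), add_zero, sum_filter]
    simp only [Fin.succ_castSucc, Fin.snoc_castSucc, Fin.val_castSucc]
  · rw [sum_filter, Fin.sum_univ_castSucc, if_neg (by simp), add_zero, Fin.succ_last, Fin.snoc_last,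
      Fin.snoc_castSucc]
    simp only [Fin.snoc_castSucc, Fin.val_castSucc, Fin.val_last, Fin.is_le, if_true, top]
    congr 2
    · push_cast
      ring
    · push_cast
      ring

lemma UtProdM_zero {i m : ℕ} (him : i ≤ m) : UtProdM q i m 0 = 1 := by
  induction i with
  | zero => simp [UtProdM]
  | succ i ih =>
    have zero_snoc : (0 : Fin (i + 2) → ℕ) =
        Fin.snoc (0 : Fin (i + 1) → ℕ) ((0 : Fin (i + 1) → ℕ) (Fin.last i) + 0) :=
      (Fin.snoc_init_self 0).symm
    rw [zero_snoc, UtProdM_snoc, ih (by lia)]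
    simp only [Pi.zero_apply, Nat.cast_zero, sum_const_zero, mul_zero, zero_add, one_mul]
    rw [qBinom_zero_right (by lia), mul_one, zero_pow two_ne_zero, pow_zero]

/-- The sum over the chains `k` of length `i + 1` bounded by `n` of the product `UtProdM q i m k`,
weighted by `q ^ ((2 (k_0 + ⋯ + k_{i-1}) + c) (n - k_i)) u_{n - k_i}`. -/
noncomputable def chainSum (q : ℂ) (m p : ℕ) (c : ℤ) (i : ℕ) (u : ℕ → ℂ) (n : ℕ) : ℂ :=
  ∑ k ∈ chains p i n, UtProdM q i m k *
    ((q ^ (2 * ∑ j : Fin i, (k j.castSucc : ℤ) + c)) ^ (n - k (Fin.last i)) *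
      u (n - k (Fin.last i)))

lemma chainSum_qDilate (hq0 : q ≠ 0) (m p : ℕ) (c : ℤ) (i : ℕ) (u : ℕ → ℂ) :
    chainSum q m p c i (qDilate q u) = chainSum q m p (c + 1) i u := by
  ext n
  refine sum_congr rfl fun k _ => ?_
  rw [qDilate, ← mul_assoc (_ ^ _), ← mul_pow, ← zpow_add_one₀ hq0, add_assoc]

lemma chainSum_zero (m : ℕ) {p : ℕ} (hp : 0 < p) (c : ℤ) (u : ℕ → ℂ) (n : ℕ) :
    chainSum q m p c 0 u n = ∑ r ∈ antidiagonal n, (q ^ c) ^ r.2 * u r.2 := by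
  have constant_mem (r : ℕ) : (fun _ => r : Fin 1 → ℕ) ∈ chains p 0 n ↔ r ≤ n := by
    simp [mem_chains, monotone_const, hp.ne']
  refine sum_bij' (fun k _ => (k 0, n - k 0)) (fun r _ _ => r.1) ?_ ?_ ?_ ?_ ?_
  · intro k hk
    have := (mem_chains.1 hk).1
    exact HasAntidiagonal.mem_antidiagonal.2 (Nat.add_sub_cancel' this)
  · intro r hr
    exact (constant_mem r.1).2 (HasAntidiagonal.antidiagonal.fst_le hr)
  · intro k _
    ext x
    rw [Fin.fin_one_eq_zero x]
  · intro r hr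
    ext
    · rfl
    · simp [← HasAntidiagonal.mem_antidiagonal.1 hr]
  · simp [UtProdM]

lemma chainSum_zero_baileyStep (hq : ¬IsOfFinOrder q) {m p : ℕ} (hp : 0 < p) (u : ℕ → ℂ) :
    chainSum q m p 1 0 (baileyStep q u) = baileyStep q (qDilate q u) := by
  ext n
  have core := sum_antidiagonal_qBinom_mul_baileyStep hq 0 n u
  rw [chainSum_zero m hp]
  simpa [qBinom_self hq, baileyStep, qDilate] using core

lemma baileyStep_chainSum (m p : ℕ) (c : ℤ) (i : ℕ) (u : ℕ → ℂ) (n : ℕ) :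
    baileyStep q (chainSum q m p c i u) n =
      ∑ k ∈ chains p i n, ∑ r ∈ antidiagonal (n - k (Fin.last i)),
        q ^ (k (Fin.last i) + r.1) ^ 2 * (UtProdM q i m k *
          ((q ^ (2 * ∑ j : Fin i, (k j.castSucc : ℤ) + c)) ^ r.1 * u r.1)) / qPoch q q r.2 := by
  let F (k : Fin (i + 1) → ℕ) (r a : ℕ) : ℂ :=
    q ^ r ^ 2 * (UtProdM q i m k * ((q ^ (2 * ∑ j : Fin i, (k j.castSucc : ℤ) + c)) ^
      (r - k (Fin.last i)) * u (r - k (Fin.last i)))) / qPoch q q a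
  calc
    baileyStep q (chainSum q m p c i u) n =
        ∑ r ∈ antidiagonal n, ∑ k ∈ chains p i r.1, F k r.1 r.2 :=
      sum_congr rfl fun r _ => by rw [chainSum, mul_sum, sum_div]
    _ = _ := by
      simp only [sum_antidiagonal_sum_chains F, F, Nat.add_sub_cancel_left]

lemma chainSum_succ_baileyStep (hq0 : q ≠ 0) (hq : ¬IsOfFinOrder q) {m p i : ℕ} {c : ℤ}
    (hc : c = min m (i + 1) - i) (hp : p ≠ i + 1)
    (hpos : ∀ n, ∀ k ∈ chains p i n, 0 < 2 * ∑ j, (k j : ℤ) + c) (u : ℕ → ℂ) :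
    chainSum q m p c (i + 1) (baileyStep q u) = baileyStep q (chainSum q m p c i u) := by
  ext n
  rw [baileyStep_chainSum, chainSum, sum_chains_succ hp]
  refine sum_congr rfl fun k hk => ?_
  obtain ⟨d, hd⟩ : ∃ d : ℕ, (d : ℤ) + 1 = 2 * ∑ j, (k j : ℤ) + c :=
    ⟨(2 * ∑ j, (k j : ℤ) + c - 1).toNat, by have := hpos n k hk; lia⟩
  have core := congrArg (UtProdM q i m k * q ^ k (Fin.last i) ^ 2 * ·)
    (sum_antidiagonal_qBinom_mul_baileyStep hq d (n - k (Fin.last i)) u)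
  simp only [mul_sum] at core
  refine Eq.trans (sum_congr rfl fun r hr => ?_) (core.trans (sum_congr rfl fun r _ => ?_))
  · have hr' : n - (k (Fin.last i) + r.1) = r.2 := by
      have := HasAntidiagonal.mem_antidiagonal.1 hr
      lia
    rw [UtProdM_snoc]
    simp only [Fin.snoc_castSucc, Fin.snoc_last, hr', ← hd]
    rw [show 2 * ∑ j, (k j : ℤ) + min m (i + 1) - (i + 1) = d by push_cast; lia]
    norm_cast
    ring
  · have exponent : q ^ (d + 1) =
        q ^ (2 * k (Fin.last i)) * q ^ (2 * ∑ j : Fin i, (k j.castSucc : ℤ) + c) := by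
      rw [← zpow_natCast, ← zpow_natCast, ← zpow_add₀ hq0]
      congr 1
      rw [Fin.sum_univ_castSucc] at hd
      push_cast
      lia
    rw [exponent]
    ring

lemma chainSum_iterate_baileyStep (hq0 : q ≠ 0) (hq : ¬IsOfFinOrder q) {i m : ℕ} (him : i ≤ m)
    (u : ℕ → ℂ) :
    chainSum q m (m + 1) 1 i ((baileyStep q)^[i + 1] u) =
      (baileyStep q)^[i + 1] (qDilate q u) := by
  induction i with
  | zero => exact chainSum_zero_baileyStep hq m.succ_pos u
  | succ i ih =>
    rw [Function.iterate_succ_apply', chainSum_succ_baileyStep hq0 hq (by lia) (by lia)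
      (fun n k _ => by positivity), ih (by lia), ← Function.iterate_succ_apply' (baileyStep q)]

-- The subtracted term is the contribution of the zero chain.
lemma chainSum_self (m : ℕ) (c : ℤ) (u : ℕ → ℂ) (n : ℕ) :
    chainSum q m m c m u n = chainSum q m (m + 1) c m u n - (q ^ c) ^ n * u n := by
  have zero_mem : (0 : Fin (m + 1) → ℕ) ∈ chains (m + 1) m n :=
    mem_chains.2 ⟨n.zero_le, monotone_const, fun j hj => by lia⟩
  rw [chainSum, chains_self_eq_erase, sum_erase_eq_sub zero_mem, ← chainSum]
  simp [UtProdM_zero]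

lemma chainSum_add_of_eq_qDilate_baileyStep (hq0 : q ≠ 0) (hq : ¬IsOfFinOrder q) (m j : ℕ)
    {y : ℕ → ℕ → ℂ} (hy : ∀ i, y i = qDilate q (baileyStep q (y (i + 1)))) :
    chainSum q m m (-j) (m + j) (y 0) = (baileyStep q)^[j] (chainSum q m m 0 m (y j)) := by
  induction j generalizing y with
  | zero => simp
  | succ j ih =>
    rw [hy 0, chainSum_qDilate hq0, ← add_assoc m, chainSum_succ_baileyStep hq0 hq (by lia) (by lia)
      fun n k hk => by have := lt_sum_of_mem_chains hk; zify at this; lia]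
    rw [show (-(j + 1 : ℕ) + 1 : ℤ) = -j by lia, ih (y := fun i => y (i + 1)) fun i => hy (i + 1),
      ← Function.iterate_succ_apply' (baileyStep q)]

end ChainSums

section CyclotomicCoefficients

/-- The summand of the inner sum of the cyclotomic coefficient `C^{(t,m)}`, where the paper's
`t, m` are `m + j + 1, m + 1`, rewritten as a Gaussian twist of a theta term. -/
noncomputable def cyclotomicTerm (q : ℂ) (m j : ℕ) (k : ℤ) : ℂ :=
  q ^ (-((m + 1 : ℕ) * k ^ 2) : ℤ) * thetaTerm q (j + 1) k

variable {q : ℂ}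

lemma cyclotomicTerm_eq (hq0 : q ≠ 0) (m j : ℕ) (k : ℤ) :
    cyclotomicTerm q m j k =
      (-1) ^ k * q ^ (-(2 * ((m + j : ℕ) : ℤ) + 3) * k * (k + 1) / 2 + ((m : ℤ) + 1) * k) := by
  obtain ⟨c, hc⟩ := Int.even_mul_succ_self k
  have hdiv : -(2 * ((m + j : ℕ) : ℤ) + 3) * k * (k + 1) / 2 = -(2 * (m + j : ℕ) + 3) * c := by
    rw [mul_assoc, hc, ← two_mul, mul_left_comm, Int.mul_ediv_cancel_left _ two_ne_zero]
  rw [cyclotomicTerm, thetaTerm, mul_left_comm, ← zpow_add₀ hq0, hdiv, hc]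
  congr 2
  rw [← two_mul, Int.mul_ediv_cancel_left _ two_ne_zero]
  push_cast
  linear_combination (-(m : ℤ) - 1) * hc

lemma zpow_mul_cyclotomicTerm (hq0 : q ≠ 0) (m j : ℕ) (k : ℤ) :
    q ^ ((m + 1 : ℕ) * k ^ 2 : ℤ) * cyclotomicTerm q m j k = thetaTerm q (j + 1) k := by
  rw [cyclotomicTerm, ← mul_assoc, ← zpow_add₀ hq0, add_neg_cancel, zpow_zero, one_mul]

lemma chainSum_self_iterate_baileyStep (hq0 : q ≠ 0) (hq : ¬IsOfFinOrder q) (m : ℕ) (u : ℕ → ℂ) :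
    chainSum q m m 0 m (qDilate q ((baileyStep q)^[m + 1] u)) =
      (baileyStep q)^[m + 1] (qDilate q u) - qDilate q ((baileyStep q)^[m + 1] u) := by
  ext n
  rw [chainSum_qDilate hq0, zero_add, chainSum_self, chainSum_iterate_baileyStep hq0 hq le_rfl,
    zpow_one, Pi.sub_apply, qDilate]

lemma chainSum_self_thetaTerm (hq0 : q ≠ 0) (hq : ¬IsOfFinOrder q) (m j : ℕ) :
    chainSum q m m 0 m (baileySum q (thetaTerm q j)) = baileySum q fun l =>
      -(q ^ ((m + 1 : ℕ) * l ^ 2 : ℤ) * dilationDefect q (cyclotomicTerm q m j) l) := by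
  let x := baileySum q fun k => q ^ (k ^ 2) * cyclotomicTerm q m j k
  have iterate_x : (baileyStep q)^[m + 1] x =
      baileyStep q (baileySum q (thetaTerm q (j + 1))) := by
    rw [baileyStep_iterate_baileySum hq0 hq, baileyStep_baileySum hq]
    congr! 2 with k
    rw [mul_left_comm, zpow_mul_cyclotomicTerm hq0]
  have iterate_dilate : (baileyStep q)^[m + 1] (qDilate q x) = baileySum q fun l =>
      thetaTerm q j l -
        q ^ ((m + 1 : ℕ) * l ^ 2 : ℤ) * dilationDefect q (cyclotomicTerm q m j) l := by
    rw [qDilate_baileySum hq0 hq, baileyStep_iterate_baileySum hq0 hq]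
    congr! 2 with l
    rw [Pi.sub_apply, mul_sub, mul_left_comm, zpow_mul_cyclotomicTerm hq0,
      ← thetaTerm_eq_zpow_mul_succ hq0]
  rw [← qDilate_baileyStep_baileySum_thetaTerm hq0 hq j, ← iterate_x,
    chainSum_self_iterate_baileyStep hq0 hq, iterate_dilate, iterate_x,
    qDilate_baileyStep_baileySum_thetaTerm hq0 hq, ← baileySum_sub]
  congr 1
  ext l
  simp

lemma chainSum_baileySum_thetaTerm_zero (hq0 : q ≠ 0) (hq : ¬IsOfFinOrder q) (m j n : ℕ) :
    chainSum q m m (-j) (m + j) (baileySum q (thetaTerm q 0)) n = -∑ l ∈ range (n + 1),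
      q ^ ((m + j + 1 : ℕ) * (l : ℤ) ^ 2) * dilationDefect q (cyclotomicTerm q m j) l *
        baileyKernel q l n := by
  rw [chainSum_add_of_eq_qDilate_baileyStep hq0 hq m j (y := fun i => baileySum q (thetaTerm q i))
      fun i => (qDilate_baileyStep_baileySum_thetaTerm hq0 hq i).symm,
    chainSum_self_thetaTerm hq0 hq, baileyStep_iterate_baileySum hq0 hq, baileySum,
    sum_Icc_neg_eq_sum_range fun l hl => by simp [dilationDefect_of_neg hl], ← sum_neg_distrib]
  refine sum_congr rfl fun l _ => ?_
  rw [show ((m + j + 1 : ℕ) * (l : ℤ) ^ 2) = j * (l : ℤ) ^ 2 + (m + 1 : ℕ) * (l : ℤ) ^ 2 by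
    push_cast; ring, zpow_add₀ hq0]
  ring

lemma chainSum_baileySum_thetaTerm_zero_eq_sum_UtProdM (hq0 : q ≠ 0) (hq : ¬IsOfFinOrder q)
    (m p : ℕ) (c : ℤ) (t n : ℕ) :
    chainSum q m p c t (baileySum q (thetaTerm q 0)) n =
      ∑ k ∈ chains p t n with k (Fin.last t) = n, UtProdM q t m k := by
  rw [chainSum, sum_filter]
  refine sum_congr rfl fun k hk => ?_
  have hn := (mem_chains.1 hk).1
  rw [baileySum_thetaTerm_zero hq0 hq]
  split_ifs with h₁ h₂ h₂
  · simp [h₁]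
  · lia
  · lia
  · simp

lemma cyclotomic_summand_eq (hq0 : q ≠ 0) (m j : ℕ) {l N : ℕ} (hl : l ≤ N) :
    q ^ ((m + j + 2) * l ^ 2 - l) * (1 - q ^ (2 * l)) / (qPoch q q (N - l) * qPoch q q (N + l)) *
        ∑ k ∈ Icc (-(l : ℤ)) ((l : ℤ) - 1), (-1 : ℂ) ^ k *
          q ^ (-(2 * ((m + j : ℕ) : ℤ) + 3) * k * (k + 1) / 2 + ((m : ℤ) + 1) * k) =
      q ^ ((m + j + 1 : ℕ) * (l : ℤ) ^ 2) * dilationDefect q (cyclotomicTerm q m j) l *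
        baileyKernel q l N := by
  have kernel : baileyKernel q l N = 1 / (qPoch q q (N - l) * qPoch q q (N + l)) := by
    rw [baileyKernel, ← Nat.cast_sub hl, ← Nat.cast_add, invQPoch_natCast, invQPoch_natCast,
      one_div_mul_one_div]
  have le_exponent : l ≤ (m + j + 2) * l ^ 2 :=
    (Nat.le_self_pow two_ne_zero l).trans (Nat.le_mul_of_pos_left _ (by lia))
  have exponent : q ^ ((m + j + 2) * l ^ 2 - l) =
      q ^ ((m + j + 1 : ℕ) * (l : ℤ) ^ 2) * q ^ ((l : ℤ) ^ 2 - l) := by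
    rw [← zpow_add₀ hq0, ← zpow_natCast, Nat.cast_sub le_exponent]
    congr 1
    push_cast
    ring
  simp only [← cyclotomicTerm_eq hq0]
  rw [kernel, exponent, dilationDefect, Icc_sub_one_right_eq_Ico]
  norm_cast
  ring

end CyclotomicCoefficients

theorem stmt13_general (t m n : ℕ) (hmt : m ≤ t) (q : ℂ) (hq0 : q ≠ 0) (hq : ¬IsOfFinOrder q) :
    -(∑ l ∈ Finset.range (n + 2),
      q ^ ((t + 2) * l ^ 2 - l) * (1 - q ^ (2 * l)) /
          (qPoch q q (n + 1 - l) * qPoch q q (n + 1 + l)) *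
        ∑ k ∈ Finset.Icc (-(l : ℤ)) ((l : ℤ) - 1),
          (-1 : ℂ) ^ k * q ^ (-(2 * (t : ℤ) + 3) * k * (k + 1) / 2 + ((m : ℤ) + 1) * k)) =
    ∑ k ∈ Finset.univ.filter
        (fun k : Fin (t+1) → Fin (n+2) =>
          (∀ i : Fin t, k i.castSucc ≤ k i.succ) ∧
          (k (Fin.last t) : ℕ) = n + 1 ∧ 1 ≤ (k ⟨m, Nat.lt_succ_of_le hmt⟩ : ℕ)),
      UtProdM q t m (fun i => (k i : ℕ)) := by
  obtain ⟨j, rfl⟩ := Nat.exists_eq_add_of_le hmt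
  calc
    _ = -∑ l ∈ range (n + 2), q ^ ((m + j + 1 : ℕ) * (l : ℤ) ^ 2) *
          dilationDefect q (cyclotomicTerm q m j) l * baileyKernel q l (n + 1) :=
      congrArg Neg.neg <| sum_congr rfl fun l hl =>
        cyclotomic_summand_eq hq0 m j (mem_range_succ_iff.1 hl)
    _ = chainSum q m m (-j) (m + j) (baileySum q (thetaTerm q 0)) (n + 1) :=
      (chainSum_baileySum_thetaTerm_zero hq0 hq m j (n + 1)).symm
    _ = ∑ k ∈ chains m (m + j) (n + 1) with k (Fin.last (m + j)) = n + 1, UtProdM q (m + j) m k :=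
      chainSum_baileySum_thetaTerm_zero_eq_sum_UtProdM hq0 hq m m (-j) (m + j) (n + 1)
    _ = _ := (sum_fin_chains hmt (n + 1) (UtProdM q (m + j) m)).symm

/-- `-q^{t-n-1} C_n^{(t,m)}(q)` (defining sum on the left) equals the
multisum over tuples `n+1 = k_T ≥ … ≥ k_1 ≥ 0` with `k_M ≥ 1`; the paper's `t, m`
are `t+1, m+1` (so `2t+1 = 2t+3`, `t+1 = t+2`, and `k_M` is the 0-based
coordinate `m`). -/
theorem stmt13 (t m n : ℕ) (hmt : m ≤ t) (q : ℂ)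
    (hq0 : 0 < ‖q‖) (hq1 : ‖q‖ < 1) :
    -(∑ l ∈ Finset.range (n + 2),
      q ^ ((t + 2) * l ^ 2 - l) * (1 - q ^ (2 * l)) /
          (qPoch q q (n + 1 - l) * qPoch q q (n + 1 + l)) *
        ∑ k ∈ Finset.Icc (-(l : ℤ)) ((l : ℤ) - 1),
          (-1 : ℂ) ^ k * q ^ (-(2 * (t : ℤ) + 3) * k * (k + 1) / 2 + ((m : ℤ) + 1) * k)) =
    ∑ k ∈ Finset.univ.filter
        (fun k : Fin (t+1) → Fin (n+2) =>
          (∀ i : Fin t, k i.castSucc ≤ k i.succ) ∧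
          (k (Fin.last t) : ℕ) = n + 1 ∧ 1 ≤ (k ⟨m, by omega⟩ : ℕ)),
      UtProdM q t m (fun i => (k i : ℕ)) := by
  exact stmt13_general t m n hmt q (norm_pos_iff.1 hq0) fun h => hq1.ne h.norm_eq_one
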